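/- Let (E_i)_{i=1}^{2m+2} denote the standard basis of E and define the component functions of the fundamental 2-form by Ω_{ij}(p) := g_p(J_p E_i, E_j) for p ∈ U. Then Ω_{ij} = −Ω_{ji}, the only nonzero components are Ω_{x^α y^α}(p) = t², Ω_{y^α t}(p) = −2 t x^α, Ω_{z t}(p) = t (and their antisymmetric counterparts), and the fundamental form is closed: for all indices i, j, k and all p ∈ U, ∂_i Ω_{jk}(p) + ∂_j Ω_{ki}(p) + ∂_k Ω_{ij}(p) = 0, where ∂_i denotes the partial derivative in the i-th coordinate direction. -/

import Mathlib

/-!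
Write `η = dz - 2 ∑ x^α dy^α`. Wherever `t` and `h t` are nonzero, all factors `h` cancel in
`g_p(J_p u, v)` and what is left is the 2-form
`Ω = t² ∑ dx^α ∧ dy^α + t η ∧ dt` (`gmet_Jmap`, with `fundForm` for the right-hand side).
Antisymmetry and the list of components are read off from this formula. Closedness is
`dΩ = 2t dt ∧ ∑ dx^α ∧ dy^α + t dη ∧ dt = 0`, since `dη = -2 ∑ dx^α ∧ dy^α`; here it is checked
on arbitrary constant vector fields `u, v, w`, using the directional derivative of `Ω(u, v)`
(`fderiv_fundForm`).
-/


/-- Points of `E = ℝ^{2m+2}`, written as tuples `p = (x, y, z, t)` with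
`x, y : Fin m → ℝ` and `z, t : ℝ`. -/
abbrev Pt (m : ℕ) : Type := (Fin m → ℝ) × (Fin m → ℝ) × ℝ × ℝ

/-- The index of the coordinate `x^α` in the standard basis of `E = ℝ^{2m+2}`. -/
def xIdx (m : ℕ) (α : Fin m) : Fin (2 * m + 2) := ⟨(α : ℕ), by have := α.isLt; omega⟩

/-- The index of the coordinate `y^α` in the standard basis of `E = ℝ^{2m+2}`. -/
def yIdx (m : ℕ) (α : Fin m) : Fin (2 * m + 2) := ⟨m + (α : ℕ), by have := α.isLt; omega⟩

/-- The index of the coordinate `z` in the standard basis of `E = ℝ^{2m+2}`. -/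
def zIdx (m : ℕ) : Fin (2 * m + 2) := ⟨2 * m, by omega⟩

/-- The index of the coordinate `t` in the standard basis of `E = ℝ^{2m+2}`. -/
def tIdx (m : ℕ) : Fin (2 * m + 2) := ⟨2 * m + 1, by omega⟩

/-- The `i`-th standard basis vector of `E = ℝ^{2m+2}`:
`∂_{x^α}` for `i = α < m`, `∂_{y^α}` for `i = m + α`, `∂_z` for `i = 2m`,
`∂_t` for `i = 2m+1`. -/
noncomputable def stdB (m : ℕ) (i : Fin (2 * m + 2)) : Pt m :=
  if hx : (i : ℕ) < m then ((Pi.single ⟨(i : ℕ), hx⟩ 1 : Fin m → ℝ), 0, 0, 0)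
  else if hy : (i : ℕ) < 2 * m then
    (0, (Pi.single ⟨(i : ℕ) - m, by omega⟩ 1 : Fin m → ℝ), 0, 0)
  else if (i : ℕ) = 2 * m then (0, 0, 1, 0)
  else (0, 0, 0, 1)

/-- The almost complex structure `J_p`. -/
noncomputable def Jmap (m : ℕ) (h : ℝ → ℝ) (p : Pt m) (u : Pt m) : Pt m :=
  (-u.2.1, u.1,
    2 * ∑ α, p.1 α * u.1 α - u.2.2.2 / (p.2.2.2 ^ 3 * h p.2.2.2 ^ 2),
    p.2.2.2 ^ 3 * h p.2.2.2 ^ 2 * (u.2.2.1 - 2 * ∑ α, p.1 α * u.2.1 α))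

/-- The Riemannian metric `g_p`. -/
noncomputable def gmet (m : ℕ) (h : ℝ → ℝ) (p : Pt m) (u v : Pt m) : ℝ :=
  p.2.2.2 ^ 2 * ∑ α, u.1 α * v.1 α + p.2.2.2 ^ 2 * ∑ α, u.2.1 α * v.2.1 α
    + p.2.2.2 ^ 4 * h p.2.2.2 ^ 2 * (u.2.2.1 - 2 * ∑ α, p.1 α * u.2.1 α)
        * (v.2.2.1 - 2 * ∑ α, p.1 α * v.2.1 α)
    + u.2.2.2 * v.2.2.2 / (p.2.2.2 ^ 2 * h p.2.2.2 ^ 2)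

/-- The components `Ω_{ij}(p) = g_p(J_p E_i, E_j)` of the fundamental 2-form. -/
noncomputable def Om (m : ℕ) (h : ℝ → ℝ) (i j : Fin (2 * m + 2)) (p : Pt m) : ℝ :=
  gmet m h p (Jmap m h p (stdB m i)) (stdB m j)

/-- The contact-type form `η = dz - 2 ∑ x^α dy^α` at `p`, applied to `u`. -/
noncomputable def eta (m : ℕ) (p u : Pt m) : ℝ := u.2.2.1 - 2 * ∑ α, p.1 α * u.2.1 α

/-- The 2-form `t² ∑ dx^α ∧ dy^α + t η ∧ dt` at `p`, applied to `u, v`. -/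
noncomputable def fundForm (m : ℕ) (u v p : Pt m) : ℝ :=
  p.2.2.2 ^ 2 * (∑ α, u.1 α * v.2.1 α - ∑ α, v.1 α * u.2.1 α)
    + p.2.2.2 * (eta m p u * v.2.2.2 - eta m p v * u.2.2.2)

lemma gmet_Jmap (m : ℕ) (h : ℝ → ℝ) (p u v : Pt m) (ht : p.2.2.2 ≠ 0) (hh : h p.2.2.2 ≠ 0) :
    gmet m h p (Jmap m h p u) v = fundForm m u v p := by
  have e : ∑ α, (-u.2.1) α * v.1 α = -∑ α, v.1 α * u.2.1 α := by
    rw [← Finset.sum_neg_distrib]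
    exact Finset.sum_congr rfl fun α _ => by simp [mul_comm]
  simp only [gmet, Jmap, fundForm, eta, e]
  field_simp
  ring

lemma eta_line (m : ℕ) (p u w : Pt m) (s : ℝ) :
    eta m (p + s • w) u = eta m p u - 2 * (s * ∑ α, w.1 α * u.2.1 α) := by
  simp only [eta, Prod.fst_add, Prod.smul_fst, Pi.add_apply, Pi.smul_apply, smul_eq_mul,
    add_mul, Finset.sum_add_distrib, mul_assoc, ← Finset.mul_sum]
  ring

/-- The derivative of `Ω(u, v)` in the direction `w`, for constant `u` and `v`; the last summand
comes from `w(η(u)) = -2 ∑ w_{x^α} u_{y^α}`. -/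
lemma fderiv_fundForm (m : ℕ) (u v w p : Pt m) :
    fderiv ℝ (fundForm m u v) p w =
      2 * p.2.2.2 * w.2.2.2 * (∑ α, u.1 α * v.2.1 α - ∑ α, v.1 α * u.2.1 α)
      + w.2.2.2 * (eta m p u * v.2.2.2 - eta m p v * u.2.2.2)
      - 2 * p.2.2.2 * ((∑ α, w.1 α * u.2.1 α) * v.2.2.2
          - (∑ α, w.1 α * v.2.1 α) * u.2.2.2) := by
  have hd : DifferentiableAt ℝ (fundForm m u v) p := by
    unfold fundForm eta
    fun_prop
  rw [← hd.lineDeriv_eq_fderiv]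
  -- Along the line `p + s w` the function is a polynomial in `s`.
  refine HasDerivAt.deriv ?_
  simp only [fundForm, eta_line, Prod.snd_add, Prod.smul_snd, smul_eq_mul]
  generalize ∑ α, u.1 α * v.2.1 α - ∑ α, v.1 α * u.2.1 α = S
  generalize ∑ α, w.1 α * u.2.1 α = P
  generalize ∑ α, w.1 α * v.2.1 α = Q
  have hT : HasDerivAt (fun s : ℝ => p.2.2.2 + s * w.2.2.2) w.2.2.2 0 := by
    simpa using ((hasDerivAt_id (0 : ℝ)).mul_const w.2.2.2).const_add p.2.2.2
  have hE : ∀ a c : ℝ, HasDerivAt (fun s : ℝ => a - 2 * (s * c)) (-(2 * c)) 0 := fun a c => by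
    simpa using (((hasDerivAt_id (0 : ℝ)).mul_const c).const_mul 2).const_sub a
  refine HasDerivAt.congr_deriv (((hT.pow 2).mul_const S).add
    (hT.mul (((hE (eta m p u) P).mul_const v.2.2.2).sub
      ((hE (eta m p v) Q).mul_const u.2.2.2)))) ?_
  simp
  ring

/-- The formula for `Ω` holds near `p`, so it may be differentiated there. -/
lemma fderiv_Om (m : ℕ) (h : ℝ → ℝ) (A B : ℝ) (hA : 0 < A)
    (hne : ∀ t ∈ Set.Ioo A B, h t ≠ 0) (i j : Fin (2 * m + 2)) (p : Pt m)
    (hp : p.2.2.2 ∈ Set.Ioo A B) :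
    fderiv ℝ (Om m h i j) p = fderiv ℝ (fundForm m (stdB m i) (stdB m j)) p := by
  apply Filter.EventuallyEq.fderiv_eq
  have hc : Continuous fun q : Pt m => q.2.2.2 := by fun_prop
  filter_upwards [hc.continuousAt.preimage_mem_nhds (isOpen_Ioo.mem_nhds hp)] with q hq
  exact gmet_Jmap m h q _ _ (hA.trans hq.1).ne' (hne _ hq)

lemma stdB_x (m : ℕ) (α : Fin m) : stdB m (xIdx m α) = (Pi.single α 1, 0, 0, 0) := by
  simp [stdB, xIdx]

lemma stdB_y (m : ℕ) (α : Fin m) : stdB m (yIdx m α) = (0, Pi.single α 1, 0, 0) := by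
  have h1 : m + (α : ℕ) < 2 * m := by omega
  simp [stdB, yIdx, h1]

lemma stdB_z (m : ℕ) : stdB m (zIdx m) = (0, 0, 1, 0) := by
  have h1 : ¬ 2 * m < m := by omega
  simp [stdB, zIdx, h1]

lemma stdB_t (m : ℕ) : stdB m (tIdx m) = (0, 0, 0, 1) := by
  have h1 : ¬ 2 * m + 1 < m := by omega
  simp [stdB, tIdx, h1]

lemma idx_cases (m : ℕ) (i : Fin (2 * m + 2)) :
    (∃ α, i = xIdx m α) ∨ (∃ α, i = yIdx m α) ∨ i = zIdx m ∨ i = tIdx m := by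
  obtain ⟨i, hi⟩ := i
  by_cases h1 : i < m
  · exact Or.inl ⟨⟨i, h1⟩, rfl⟩
  by_cases h2 : i < 2 * m
  · exact Or.inr (Or.inl ⟨⟨i - m, by omega⟩, by ext; simp only [yIdx]; omega⟩)
  · simp only [zIdx, tIdx, Fin.mk.injEq]
    omega

/-- The fundamental 2-form is antisymmetric, its only nonzero components are
`Ω_{x^α y^α} = t²`, `Ω_{y^α t} = −2tx^α`, `Ω_{z t} = t` (and their antisymmetric
counterparts), and it is closed: `∂_i Ω_{jk} + ∂_j Ω_{ki} + ∂_k Ω_{ij} = 0`. -/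
theorem stmt16 (m : ℕ) (hm : 1 ≤ m) (A B : ℝ) (hA : 0 < A) (hAB : A < B)
    (h : ℝ → ℝ) (hsm : ContDiffOn ℝ (⊤ : ℕ∞) h (Set.Ioo A B))
    (hne : ∀ t ∈ Set.Ioo A B, h t ≠ 0) :
    (∀ i j : Fin (2 * m + 2), ∀ p : Pt m, p.2.2.2 ∈ Set.Ioo A B →
      Om m h i j p = -Om m h j i p) ∧
    (∀ α : Fin m, ∀ p : Pt m, p.2.2.2 ∈ Set.Ioo A B →
      Om m h (xIdx m α) (yIdx m α) p = p.2.2.2 ^ 2 ∧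
      Om m h (yIdx m α) (tIdx m) p = -2 * p.2.2.2 * p.1 α ∧
      Om m h (zIdx m) (tIdx m) p = p.2.2.2) ∧
    (∀ i j : Fin (2 * m + 2), ∀ p : Pt m, p.2.2.2 ∈ Set.Ioo A B →
      (∀ α : Fin m, ¬(i = xIdx m α ∧ j = yIdx m α) ∧ ¬(j = xIdx m α ∧ i = yIdx m α) ∧
        ¬(i = yIdx m α ∧ j = tIdx m) ∧ ¬(j = yIdx m α ∧ i = tIdx m)) →
      ¬(i = zIdx m ∧ j = tIdx m) → ¬(j = zIdx m ∧ i = tIdx m) →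
      Om m h i j p = 0) ∧
    (∀ i j k : Fin (2 * m + 2), ∀ p : Pt m, p.2.2.2 ∈ Set.Ioo A B →
      fderiv ℝ (Om m h j k) p (stdB m i) + fderiv ℝ (Om m h k i) p (stdB m j)
        + fderiv ℝ (Om m h i j) p (stdB m k) = 0) := by
  have key : ∀ i j : Fin (2 * m + 2), ∀ p : Pt m, p.2.2.2 ∈ Set.Ioo A B →
      Om m h i j p = fundForm m (stdB m i) (stdB m j) p := fun i j p hp =>
    gmet_Jmap m h p _ _ (hA.trans hp.1).ne' (hne _ hp)
  refine ⟨fun i j p hp => ?_, fun α p hp => ⟨?_, ?_, ?_⟩, fun i j p hp h1 h2 h3 => ?_,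
    fun i j k p hp => ?_⟩
  · rw [key i j p hp, key j i p hp]
    simp only [fundForm]
    ring
  · rw [key _ _ p hp, stdB_x, stdB_y]
    simp [fundForm, eta, Pi.single_apply]
  · rw [key _ _ p hp, stdB_t, stdB_y]
    simp [fundForm, eta, Pi.single_apply]
    ring
  · rw [key _ _ p hp, stdB_t, stdB_z]
    simp [fundForm, eta]
  · rw [key i j p hp]
    -- For `i = x^α`, `j = y^β` (or conversely) the hypothesis forces `α ≠ β`.
    rcases idx_cases m i with ⟨α, rfl⟩ | ⟨α, rfl⟩ | rfl | rfl <;>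
    rcases idx_cases m j with ⟨β, rfl⟩ | ⟨β, rfl⟩ | rfl | rfl <;>
    simp only [stdB_x, stdB_y, stdB_z, stdB_t]
    case inr.inl.inr.inr.inr => exact absurd ⟨rfl, rfl⟩ (h1 α).2.2.1
    case inr.inr.inr.inr.inl => exact absurd ⟨rfl, rfl⟩ (h1 β).2.2.2
    case inr.inr.inl.inr.inr.inr => exact absurd ⟨rfl, rfl⟩ h2
    case inr.inr.inr.inr.inr.inl => exact absurd ⟨rfl, rfl⟩ h3
    case inl.inr.inl =>
      have hab : β ≠ α := fun e => (h1 α).1 ⟨rfl, by rw [e]⟩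
      simp [fundForm, eta, Pi.single_apply, hab]
    case inr.inl.inl =>
      have hab : α ≠ β := fun e => (h1 β).2.1 ⟨rfl, by rw [e]⟩
      simp [fundForm, eta, Pi.single_apply, hab]
    all_goals simp [fundForm, eta]
  · simp only [fderiv_Om m h A B hA hne _ _ p hp, fderiv_fundForm]
    ring
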